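/- Let α be a partition with all parts at least 2, put ℓ := ℓ(α), and let ν be a partition of |α|. There exists a standard Young tableau of shape ν whose descent set equals S(α) = {α_1, α_1+α_2, …, α_1+⋯+α_{ℓ−1}} if and only if ν lies in the dominance-order interval [α, (|α|−ℓ+1, ℓ−1)] and ν_i ≤ Σ_{q=i}^{ℓ} α_q − (ℓ−i) for every 1 ≤ i ≤ ℓ−1. -/

import Mathlib

namespace RibbonSupport

/-- A partition: a weakly decreasing list of positive integers. -/
def IsPartition (a : List ℕ) : Prop := a.Pairwise (· ≥ ·) ∧ ∀ x ∈ a, 0 < x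

/-- All parts of the list are at least `m`. -/
def PartsGE (a : List ℕ) (m : ℕ) : Prop := ∀ x ∈ a, m ≤ x

/-- Dominance order `lam ⪯ mu` on partitions of the same size. -/
def DomLE (lam mu : List ℕ) : Prop :=
  lam.sum = mu.sum ∧ ∀ i, (lam.take i).sum ≤ (mu.take i).sum

/-- The number of nonzero parts. -/
def lenp (p : List ℕ) : ℕ := p.countP (fun x => decide (x ≠ 0))

/-- `p` is an overlapping partition for the monotone ribbon with row lengths `a`:
`p` has the same length as `a`, its last entry is `0`, and consecutive entries
decrease by `0` or `1`. -/
def IsOverlapSeq (a p : List ℕ) : Prop :=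
  p.length = a.length ∧ p.getD (a.length - 1) 0 = 0 ∧
    ∀ i, i + 1 < a.length →
      p.getD i 0 = p.getD (i + 1) 0 ∨ p.getD i 0 = p.getD (i + 1) 0 + 1

/-- Rows `i` and `i+1` (0-based, top to bottom) of `R_a^p` overlap
(share exactly one column) exactly when `p_i = p_{i+1} + 1`. -/
def ovOf (p : List ℕ) : ℕ → Bool := fun i => decide (p.getD i 0 = p.getD (i + 1) 0 + 1)

def rowOffset (a : List ℕ) (i : ℕ) : ℕ := (a.take i).sum

/-- `w` is the reading word (rows right-to-left, top to bottom) of a semistandard filling of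
the ribbon with row lengths `a` (top to bottom) in which consecutive rows `i`, `i+1` share
exactly one column when `ov i = true` and no column otherwise.  Semistandardness amounts to:
within each row block the word is weakly decreasing (rows weakly increase left to right), and
at each overlapping gap the word strictly increases (columns strictly increase downwards). -/
def IsRibbonWord (a : List ℕ) (ov : ℕ → Bool) (w : List ℕ) : Prop :=
  w.length = a.sum ∧
  (∀ i j, i < a.length → j + 1 < a.getD i 0 →
    w.getD (rowOffset a i + j + 1) 0 ≤ w.getD (rowOffset a i + j) 0) ∧
  (∀ i, i + 1 < a.length → ov i = true →
    w.getD (rowOffset a (i + 1) - 1) 0 < w.getD (rowOffset a (i + 1)) 0)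

/-- Yamanouchi (lattice) word: each prefix has at least as many letters `j` as `j+1`. -/
def IsYam (w : List ℕ) : Prop := ∀ k j, (w.take k).count (j + 2) ≤ (w.take k).count (j + 1)

/-- The word `w` has content `nu` (and only positive letters). -/
def HasContent (w : List ℕ) (nu : List ℕ) : Prop :=
  (∀ j, w.count (j + 1) = nu.getD j 0) ∧ w.count 0 = 0

/-- There is an LR filling of the ribbon `(a, ov)` with content `nu`. -/
def InSupportOv (a : List ℕ) (ov : ℕ → Bool) (nu : List ℕ) : Prop :=
  ∃ w : List ℕ, IsRibbonWord a ov w ∧ IsYam w ∧ HasContent w nu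

/-- `nu` is in the Schur support of the monotone ribbon `R_a^p`. -/
def InSupport (a p nu : List ℕ) : Prop := InSupportOv a (ovOf p) nu

/-- `nu` is in the Schur support of the connected ribbon `R_a`. -/
def InSupportConn (a nu : List ℕ) : Prop := InSupportOv a (fun _ => true) nu

/-- `nu` belongs to the Schur interval `[a, (|a| - p₁, p₁)]` in dominance order. -/
def InInterval (a p nu : List ℕ) : Prop :=
  DomLE a nu ∧ DomLE nu [a.sum - p.getD 0 0, p.getD 0 0]

/-- The Schur support of `R_a^p`, as a set of partitions. -/
def SupportSet (a p : List ℕ) : Set (List ℕ) := {nu | IsPartition nu ∧ InSupport a p nu}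

/-- The Schur interval of `R_a^p`, as a set of partitions. -/
def IntervalSet (a p : List ℕ) : Set (List ℕ) := {nu | IsPartition nu ∧ InInterval a p nu}

/-- `R_a^p` has full Schur support. -/
def FullSupport (a p : List ℕ) : Prop := SupportSet a p = IntervalSet a p

/-- The Schur support of the connected ribbon `R_a`, as a set of partitions. -/
def SupportSetConn (a : List ℕ) : Set (List ℕ) := {nu | IsPartition nu ∧ InSupportConn a nu}

/-- `ϱ_i` (1-based `i`): `Σ_{q=i+1}^{ℓ(a)} a_q − p_{i+1} + 1`. -/
def rho (a p : List ℕ) (i : ℕ) : ℕ := (a.drop i).sum + 1 - p.getD i 0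

/-- Entry `j` (1-based) of the `i`-witness vector: `[ϱ_i − a_j]₊`. -/
def wit (a p : List ℕ) (i j : ℕ) : ℕ := rho a p i - a.getD (j - 1) 0

/-- Size of the `i`-witness vector. -/
def witSize (a p : List ℕ) (i : ℕ) : ℕ := ∑ j ∈ Finset.Icc 1 i, wit a p i j

/-! ### Tableaux -/

/-- Cells (0-based `(row, column)`) of the Young diagram of `lam`. -/
def cells (lam : List ℕ) : Finset (ℕ × ℕ) :=
  (Finset.range lam.length ×ˢ Finset.range (lam.sum + 1)).filter
    (fun x => x.2 < lam.getD x.1 0)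

/-- `T` is a semistandard Young tableau of shape `lam` and content `al`
(normalized to vanish off the diagram). -/
def IsTab (lam al : List ℕ) (T : ℕ × ℕ → ℕ) : Prop :=
  (∀ x, x ∉ cells lam → T x = 0) ∧
  (∀ x ∈ cells lam, 1 ≤ T x) ∧
  (∀ i c, (i, c + 1) ∈ cells lam → T (i, c) ≤ T (i, c + 1)) ∧
  (∀ i c, (i + 1, c) ∈ cells lam → T (i, c) < T (i + 1, c)) ∧
  (∀ k, ((cells lam).filter (fun x => T x = k + 1)).card = al.getD k 0)

/-- Standardization of a tableau: entries are renumbered `1, …, N` in increasing order of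
value, entries of equal value being numbered from southwest to northeast (by column). -/
def stdz (lam : List ℕ) (T : ℕ × ℕ → ℕ) : ℕ × ℕ → ℕ := fun x =>
  if x ∈ cells lam then
    ((cells lam).filter (fun y => T y < T x ∨ (T y = T x ∧ y.2 < x.2))).card + 1
  else 0

/-- `n` is a descent of the standard tableau `U`: the entry `n+1` lies in a strictly
lower row than the entry `n`. -/
def IsDescent (lam : List ℕ) (U : ℕ × ℕ → ℕ) (n : ℕ) : Prop :=
  ∃ x ∈ cells lam, ∃ y ∈ cells lam, U x = n ∧ U y = n + 1 ∧ x.1 < y.1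

/-- `S(al)`: the set of proper partial sums of the composition `al`. -/
def Sset (al : List ℕ) : Set ℕ := {n | ∃ k, 0 < k ∧ k < al.length ∧ n = (al.take k).sum}

/-- `s ∈ D(T)`: some entry `s+1` of `T` lies in a strictly lower row than some entry `s`. -/
def TabDescent (lam : List ℕ) (T : ℕ × ℕ → ℕ) (s : ℕ) : Prop :=
  ∃ x ∈ cells lam, ∃ y ∈ cells lam, T x = s ∧ T y = s + 1 ∧ x.1 < y.1

/-- The word `w_{T̂}` of `T`: its `u`-th letter (1-based) is the 1-based row index of the
entry `u` of the standardization `T̂` of `T`. -/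
def wordOf (lam : List ℕ) (T : ℕ × ℕ → ℕ) : List ℕ :=
  (List.range lam.sum).map fun n =>
    ∑ x ∈ (cells lam).filter (fun x => stdz lam T x = n + 1), (x.1 + 1)

/-- `j ∈ {2, …, ℓ(al)}` is a critical number of `T ∈ Tab(lam, al)`:
`w_{α_1+⋯+α_{j-1}} = w_{α_1+⋯+α_{j-1}+1}` in the word of `T`. -/
def CriticalNum (lam al : List ℕ) (T : ℕ × ℕ → ℕ) (j : ℕ) : Prop :=
  2 ≤ j ∧ j ≤ al.length ∧
    (wordOf lam T).getD ((al.take (j - 1)).sum - 1) 0 =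
      (wordOf lam T).getD ((al.take (j - 1)).sum) 0

/-- `j ∈ {2, …, ℓ(al)}` is a negligible critical number of `T`:
`w_{α_1+⋯+α_{j-1}} > w_{α_1+⋯+α_{j-1}+1}` in the word of `T`. -/
def NegligibleNum (lam al : List ℕ) (T : ℕ × ℕ → ℕ) (j : ℕ) : Prop :=
  2 ≤ j ∧ j ≤ al.length ∧
    (wordOf lam T).getD ((al.take (j - 1)).sum) 0 <
      (wordOf lam T).getD ((al.take (j - 1)).sum - 1) 0

/-- The overlapping partition of the ribbon encoded by its gap pattern `b`
(`b j = true` iff rows `j` and `j+1`, 0-based, overlap). -/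
def povOf (b : List Bool) : List ℕ :=
  (List.range (b.length + 1)).map fun i => (b.drop i).count true

/-! ### Connected ribbons with rows in arbitrary order -/

/-- Starting column (0-based) of row `i` of the connected ribbon with row lengths `b`. -/
def startConn (b : List ℕ) (i : ℕ) : ℕ := (b.drop (i + 1)).sum + (i + 1) - b.length

/-- Number of columns of the connected ribbon with row lengths `b`. -/
def ncols (b : List ℕ) : ℕ := b.sum + 1 - b.length

/-- Length of column `c` of the connected ribbon with row lengths `b`. -/
def colLen (b : List ℕ) (c : ℕ) : ℕ :=
  ((Finset.range b.length).filter
    (fun i => startConn b i ≤ c ∧ c < startConn b i + b.getD i 0)).card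

/-- Deletion rank of row `j`: the number of rows deleted strictly before row `j` when one
repeatedly deletes a longest remaining row in highest (most northern) position. -/
def delRank (g : List ℕ) (j : ℕ) : ℕ :=
  ((Finset.range g.length).filter
    (fun j' => g.getD j 0 < g.getD j' 0 ∨ (g.getD j' 0 = g.getD j 0 ∧ j' < j))).card

/-- The overlapping partition of the connected ribbon with row lengths `g`:
its `(d+1)`-st entry is the number of length-two columns of the ribbon remaining
after deleting `d` rows as above, i.e. the number of adjacent pairs of surviving rows. -/
def ppiList (g : List ℕ) : List ℕ :=
  (List.range g.length).map fun d =>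
    ((Finset.range (g.length - 1)).filter
      (fun j => d ≤ delRank g j ∧ d ≤ delRank g (j + 1))).card

/-!
A tableau is a chain of shapes, the `k`-th one formed by the entries `≤ k`, in which consecutive
shapes differ by a horizontal strip. Cutting a standard tableau with descent set `S(α)` at the
partial sums of `α` gives a chain with strips of sizes `α_1, …, α_ℓ` in which some cell of each
strip lies above some cell of the next one. Conversely, standardizing such a chain gives back a
standard tableau with descent set `S(α)`, since each strip is numbered from left to right.

The first `i - 1` strips of such a chain lie above row `i`, and of the two cells of each descent
between later strips, either the upper one lies above row `i` or the lower one lies below it. This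
forces `ℓ - i` further cells outside row `i` and bounds its length. For the converse, build the
chain backwards. Cut the rows of `ν` above the last one down to their bounds for `ℓ - 1` strips (at
most one row exceeds its bound, because all parts of `α` are at least `2`), then remove the rest of
a horizontal strip of size `α_ℓ` from the lowest rows possible. It contains a cell of the last row.
If it exhausts that row, then the preceding strip lies entirely above it. Otherwise the last row
remains, strictly below its bound, and the next step can be made to remove a cell above it.
-/

section RangeSums

open Finset

theorem sum_range_add_mul_le {f : ℕ → ℕ} {c m n : ℕ} (hmn : m ≤ n)
    (hf : ∀ j, m ≤ j → j < n → c ≤ f j) :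
    ∑ j ∈ range m, f j + c * (n - m) ≤ ∑ j ∈ range n, f j := by
  rw [← sum_range_add_sum_Ico f hmn]
  have := card_nsmul_le_sum (Ico m n) f c fun j hj => hf j (mem_Ico.1 hj).1 (mem_Ico.1 hj).2
  rw [Nat.card_Ico, smul_eq_mul, mul_comm] at this
  exact Nat.add_le_add_left this _

theorem sum_range_le_sum_range (f : ℕ → ℕ) {m n : ℕ} (h : m ≤ n) :
    ∑ j ∈ range m, f j ≤ ∑ j ∈ range n, f j :=
  sum_le_sum_of_subset (range_mono h)

theorem sum_range_update_add {i n : ℕ} (f : ℕ → ℕ) (b : ℕ) (h : i < n) :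
    ∑ j ∈ range n, Function.update f i b j + f i = ∑ j ∈ range n, f j + b := by
  rw [sum_update_of_mem (mem_range.2 h), ← sum_sdiff (singleton_subset_iff.2 (mem_range.2 h)),
    sum_singleton]
  omega

theorem sum_range_update_of_le {i n : ℕ} (f : ℕ → ℕ) (b : ℕ) (h : n ≤ i) :
    ∑ j ∈ range n, Function.update f i b j = ∑ j ∈ range n, f j :=
  sum_update_of_notMem (by simpa using h) f b

theorem exists_greedy_between {lo hi : ℕ → ℕ} (h : lo ≤ hi) {n M : ℕ}
    (hlo : ∑ j ∈ range n, lo j ≤ M) (hhi : M ≤ ∑ j ∈ range n, hi j) :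
    ∃ v, lo ≤ v ∧ v ≤ hi ∧ (∀ i j, i < j → v i = hi i ∨ v j = lo j) ∧
      (∀ j, n ≤ j → v j = lo j) ∧ ∑ j ∈ range n, v j = M := by
  induction n generalizing M with
  | zero =>
    refine ⟨lo, le_rfl, h, fun _ _ _ => .inr rfl, fun _ _ => rfl, ?_⟩
    rw [sum_range_zero] at hhi ⊢
    omega
  | succ n ih =>
    rw [sum_range_succ] at hlo hhi
    by_cases hM : ∑ j ∈ range n, hi j + lo n ≤ M
    · have hlt {j : ℕ} (hj : j < n) : (if j < n then hi j else if j = n then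
        M - ∑ j ∈ range n, hi j else lo j) = hi j := if_pos hj
      refine ⟨fun j => if j < n then hi j else if j = n then M - ∑ j ∈ range n, hi j else lo j,
        fun j => ?_, fun j => ?_, fun i j hij => ?_, fun j hj => ?_, ?_⟩
      · have := h j; grind
      · have := h j; grind
      · grind
      · grind
      · rw [sum_range_succ, sum_congr rfl fun j hj => hlt (mem_range.1 hj)]
        grind
    · obtain ⟨v, hlv, hvh, hv, hv', hsum⟩ := ih (M := M - lo n) (by omega) (by omega)
      refine ⟨v, hlv, hvh, hv, fun j hj => hv' j (by omega), ?_⟩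
      rw [sum_range_succ, hsum, hv' n le_rfl]
      omega

end RangeSums

section Admissible

open Finset

variable {α ν : ℕ → ℕ} {l r : ℕ}

/-- The upper bound `α i + ⋯ + α (l - 1) - (l - 1 - i)` on the `i`-th row (rows are numbered from
`0`). Below the first `l` rows it is `0`. -/
def rowCap (α : ℕ → ℕ) (l i : ℕ) : ℕ := ∑ j ∈ Ico i l, α j - (l - 1 - i)

/-- The right-hand side of the theorem: `ν` is a partition of `α 0 + ⋯ + α (l - 1)` that dominates
`α` and has no row longer than its cap. The cap on row `0` encodes the upper end of the dominance
interval, and the cap `0` on the rows from `l` on bounds the number of rows. -/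
structure Admissible (α : ℕ → ℕ) (l : ℕ) (ν : ℕ → ℕ) : Prop where
  antitone : Antitone ν
  sum_le : ∀ k ≤ l, ∑ j ∈ range k, α j ≤ ∑ j ∈ range k, ν j
  sum_eq : ∑ j ∈ range l, ν j = ∑ j ∈ range l, α j
  row_le : ∀ i, ν i ≤ rowCap α l i

/-- Removing `v` from `ν` leaves a horizontal strip, that is, the two sequences interlace. -/
def IsHorizontalStrip (v ν : ℕ → ℕ) : Prop := ∀ j, ν (j + 1) ≤ v j ∧ v j ≤ ν j

/-- A semistandard tableau of content `α 0, …, α (l - 1)` as the chain of the shapes `μ k` formed by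
its entries `≤ k`. The last field says that each of `1, …, l - 1` is a descent. -/
structure Chain (α : ℕ → ℕ) (l : ℕ) (μ : ℕ → ℕ → ℕ) : Prop where
  zero : μ 0 = 0
  strip : ∀ k < l, IsHorizontalStrip (μ k) (μ (k + 1))
  sum : ∀ k ≤ l, ∑ j ∈ range k, μ k j = ∑ j ∈ range k, α j
  desc : ∀ k, k + 1 < l → ∃ i j, i < j ∧ μ k i < μ (k + 1) i ∧ μ (k + 1) j < μ (k + 2) j

/-- The last nonempty row `r` of `ν` is shorter than the row above it and than its cap. As
`0 - 1 = 0`, this excludes `r = 0`. -/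
structure ExtendableLastRow (α : ℕ → ℕ) (l : ℕ) (ν : ℕ → ℕ) (r : ℕ) : Prop where
  pos : 0 < ν r
  succ_eq_zero : ν (r + 1) = 0
  lt_pred : ν r < ν (r - 1)
  lt_rowCap : ν r < rowCap α l r

/-- Upper bounds `U` for the rows of the partition that remains after the removal of the last
horizontal strip from `ν`, where `r` is the last nonempty row of `ν`. -/
structure IsTrim (α : ℕ → ℕ) (l : ℕ) (ν : ℕ → ℕ) (r : ℕ) (U : ℕ → ℕ) : Prop where
  succ_le : ∀ j, ν (j + 1) ≤ U j
  le : U ≤ ν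
  last : U r = ν r
  sum_le : ∀ k < r, ∑ j ∈ range k, α j ≤ ∑ j ∈ range k, U j
  sum_add_le : ∑ j ∈ range r, α j + (l - r) ≤ ∑ j ∈ range r, U j
  sum_lt : ∑ j ∈ range r, ν j < ∑ j ∈ range r, U j + α l
  row_le : ∀ j < r, U j ≤ rowCap α l j

theorem rowCap_add (hα : ∀ j < l, 1 ≤ α j) {i : ℕ} (hi : i < l) :
    rowCap α l i + (l - 1 - i) + ∑ j ∈ range i, α j = ∑ j ∈ range l, α j := by
  have hsplit := sum_range_add_sum_Ico α hi.le
  have := sum_range_add_mul_le hi.le fun j _ => hα j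
  unfold rowCap
  omega

theorem le_rowCap_add (hα : Antitone α) (h2 : ∀ j < l, 2 ≤ α j) {i : ℕ} (hi : i < l) :
    α l + l ≤ rowCap α l i + i + 1 := by
  have hcap := rowCap_add (fun j hj => (h2 j hj).trans' one_le_two) hi
  have hsum := sum_range_add_mul_le hi fun j _ => h2 j
  have := hα hi.le
  rw [sum_range_succ] at hsum
  omega

theorem rowCap_succ_add_one (h1 : ∀ j < l + 1, 1 ≤ α j) {i : ℕ} (hi : i < l) :
    rowCap α (l + 1) i + 1 = rowCap α l i + α l := by
  have hcap := rowCap_add (fun j hj => h1 j (by omega)) hi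
  have hcap' := rowCap_add h1 (by omega : i < l + 1)
  rw [sum_range_succ] at hcap'
  omega

namespace Admissible

theorem eq_zero (hν : Admissible α l ν) {i : ℕ} (hi : l ≤ i) : ν i = 0 := by
  simpa [rowCap, Ico_eq_empty_of_le hi] using hν.row_le i

theorem sum_range_eq (hν : Admissible α l ν) {n : ℕ} (hn : ν n = 0) :
    ∑ j ∈ range n, ν j = ∑ j ∈ range l, α j := by
  have hzero : ∀ j ≥ n, ν j = 0 := fun j hj => Nat.le_zero.1 (hn ▸ hν.antitone hj)
  rw [← hν.sum_eq, ← eventually_constant_sum hzero (le_max_left n l),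
    ← eventually_constant_sum (fun j hj => hν.eq_zero hj) (le_max_right n l)]

theorem le_last (hν : Admissible α (l + 1) ν) (hpos : 0 < ν r) : r ≤ l := by
  by_contra! hlr
  exact hpos.ne' (hν.eq_zero hlr)

theorem exists_last (hν : Admissible α (l + 1) ν) (hα : 0 < α 0) :
    ∃ r, 0 < ν r ∧ ν (r + 1) = 0 := by
  have h0 : 0 < ν 0 := hα.trans_le (by simpa using hν.sum_le 1 (by omega))
  by_contra! h
  have hpos : ∀ r, 0 < ν r := Nat.rec h0 fun r hr => Nat.pos_of_ne_zero (h r hr)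
  exact (hpos (l + 1)).ne' (hν.eq_zero le_rfl)

theorem last_unique (hν : Admissible α l ν) {r' : ℕ} (hpos : 0 < ν r) (hnext : ν (r + 1) = 0)
    (hpos' : 0 < ν r') (hnext' : ν (r' + 1) = 0) : r = r' := by
  have hle {p q : ℕ} (hp : ν (p + 1) = 0) (hq : 0 < ν q) : q ≤ p := by
    by_contra! hpq
    have := hν.antitone (by omega : p + 1 ≤ q)
    omega
  exact (hle hnext' hpos).antisymm (hle hnext hpos')

theorem exists_horizontalStrip_below (hν : Admissible α (l + 1) ν) (hα : Antitone α)
    {U : ℕ → ℕ} (hνU : ∀ j, ν (j + 1) ≤ U j) (hU : U ≤ ν)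
    (hdom : ∀ k ≤ l, ∑ j ∈ range k, α j ≤ ∑ j ∈ range k, U j) :
    ∃ v, IsHorizontalStrip v ν ∧ v ≤ U ∧ (∀ j ≥ l, v j = 0) ∧
      (∀ k ≤ l, ∑ j ∈ range k, α j ≤ ∑ j ∈ range k, v j) ∧
      ∑ j ∈ range l, v j = ∑ j ∈ range l, α j ∧
      ∀ i j, i < j → v i = U i ∨ v j = ν (j + 1) := by
  have htotal := hν.sum_eq
  have hfirst : α 0 ≤ ν 0 := by simpa using hν.sum_le 1 (by omega)
  have hlo : ∑ j ∈ range l, ν (j + 1) ≤ ∑ j ∈ range l, α j := by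
    have := hα l.zero_le
    rw [sum_range_succ', sum_range_succ] at htotal
    omega
  obtain ⟨v, hνv, hvU, hext, hv0, hsum⟩ := exists_greedy_between hνU hlo (hdom l le_rfl)
  refine ⟨v, fun j => ⟨hνv j, (hvU j).trans (hU j)⟩, hvU,
    fun j hj => (hv0 j hj).trans (hν.eq_zero (by omega)), fun k hk => ?_, hsum, hext⟩
  by_cases hfull : ∀ j < k, v j = U j
  · rw [sum_congr rfl fun j hj => hfull j (mem_range.1 hj)]
    exact hdom k hk
  · push Not at hfull
    obtain ⟨i, hik, hi⟩ := hfull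
    have htail : ∑ j ∈ Ico k l, v j = ∑ j ∈ Ico (k + 1) (l + 1), ν j := by
      rw [← sum_Ico_add']
      exact sum_congr rfl fun j hj =>
        (hext i j (hik.trans_le (mem_Ico.1 hj).1)).resolve_left hi
    have hsplit := sum_range_add_sum_Ico v hk
    have hsplit' := sum_range_add_sum_Ico ν (by omega : k + 1 ≤ l + 1)
    have hdom' := hν.sum_le (k + 1) (by omega)
    have := hα hk
    rw [sum_range_succ α] at htotal hdom'
    omega

theorem sum_range_add_le_of_le_rowCap (hν : Admissible α (l + 1) ν)
    (h1 : ∀ j < l + 1, 1 ≤ α j) (hpos : 0 < ν r) (hnext : ν (r + 1) = 0) {e : ℕ}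
    (hcap : ν r + e ≤ rowCap α (l + 1) r) :
    ∑ j ∈ range r, α j + (l - r) + e ≤ ∑ j ∈ range r, ν j := by
  have htotal := hν.sum_range_eq hnext
  have := rowCap_add h1 (Nat.lt_succ_of_le (hν.le_last hpos))
  rw [sum_range_succ] at htotal
  omega

theorem row_add_lt_of_rowCap_lt (hν : Admissible α (l + 1) ν) (h1 : ∀ j < l + 1, 1 ≤ α j)
    {p q : ℕ} (hpq : p < q) (hp : rowCap α l p < ν p) (hq : 0 < ν q) : ν q + q < l + α l := by
  have hql : q ≤ l := hν.le_last hq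
  have hcap := rowCap_add (fun j hj => h1 j (by omega)) (hpq.trans_le hql)
  have hdom := hν.sum_le p (by omega)
  have htotal : ∑ j ∈ range (q + 1), ν j ≤ _ :=
    (sum_range_le_sum_range ν (by omega : q + 1 ≤ l + 1)).trans_eq hν.sum_eq
  have hmid := sum_range_add_mul_le (f := ν) (c := 1) hpq
    fun j _ hj => hq.trans_le (hν.antitone hj.le)
  rw [sum_range_succ, sum_range_succ α] at htotal
  rw [sum_range_succ] at hmid
  omega

theorem isTrim_self (hν : Admissible α (l + 1) ν) (h1 : ∀ j < l + 1, 1 ≤ α j) (hpos : 0 < ν r)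
    (hnext : ν (r + 1) = 0) (hcap : ∀ j < r, ν j ≤ rowCap α l j) : IsTrim α l ν r ν where
  succ_le j := hν.antitone j.le_succ
  le := le_rfl
  last := rfl
  sum_le k hk := hν.sum_le k (hk.le.trans ((hν.le_last hpos).trans l.le_succ))
  sum_add_le := hν.sum_range_add_le_of_le_rowCap h1 hpos hnext (e := 0) (hν.row_le r)
  sum_lt := Nat.lt_add_of_pos_right (h1 l l.lt_succ_self)
  row_le := hcap

theorem isTrim_update_pred (hν : Admissible α (l + 1) ν) (h2 : ∀ j < l + 1, 2 ≤ α j)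
    (hr : ExtendableLastRow α (l + 1) ν r) (hcap : ∀ j < r, ν j ≤ rowCap α l j) :
    IsTrim α l ν r (Function.update ν (r - 1) (ν (r - 1) - 1)) := by
  have h1 : ∀ j < l + 1, 1 ≤ α j := fun j hj => (h2 j hj).trans' one_le_two
  have hlt := hr.lt_pred
  have hr0 : 0 < r := Nat.pos_of_ne_zero fun h => by simp [h] at hlt
  have hle : Function.update ν (r - 1) (ν (r - 1) - 1) ≤ ν :=
    update_le_self_iff.2 (Nat.sub_le _ _)
  have hsum := sum_range_update_add ν (ν (r - 1) - 1) (Nat.sub_one_lt_of_lt hr0)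
  have hslack := hν.sum_range_add_le_of_le_rowCap h1 hr.pos hr.succ_eq_zero (e := 1) hr.lt_rowCap
  have := h2 l l.lt_succ_self
  refine ⟨fun j => ?_, hle, Function.update_of_ne (by omega) _ _, fun k hk => ?_, by omega,
    by omega, fun j hj => (hle j).trans (hcap j hj)⟩
  · obtain rfl | hj := eq_or_ne j (r - 1)
    · rw [Function.update_self, Nat.sub_add_cancel hr0]
      omega
    · rw [Function.update_of_ne hj]
      exact hν.antitone j.le_succ
  · rw [sum_range_update_of_le _ _ (by omega)]
    exact hν.sum_le k (by have := hν.le_last hr.pos; omega)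

theorem sum_range_add_le_sum_range_update (hν : Admissible α (l + 1) ν)
    (h2 : ∀ j < l + 1, 2 ≤ α j) (hpos : 0 < ν r) {i k : ℕ} (hik : i < k) (hkr : k ≤ r) :
    ∑ j ∈ range k, α j + (l - k) ≤ ∑ j ∈ range k, Function.update ν i (rowCap α l i) j := by
  have hrl := hν.le_last hpos
  have hcap := rowCap_add (l := l) (i := i) (fun j hj => (h2 j (by omega)).trans' one_le_two)
    (by omega)
  have hdom := hν.sum_le i (by omega)
  have hhead := sum_range_update_of_le ν (rowCap α l i) (le_refl i)
  have htail := sum_range_add_mul_le (f := Function.update ν i (rowCap α l i)) (c := 1) hik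
    fun j hij hj => by
      rw [Function.update_of_ne (by omega)]
      exact hpos.trans_le (hν.antitone (by omega))
  rw [sum_range_succ, Function.update_self] at htail
  have hgrow := sum_range_add_mul_le (hkr.trans hrl) fun j _ hj => h2 j (by omega)
  omega

theorem isTrim_update_rowCap (hν : Admissible α (l + 1) ν) (hα : Antitone α)
    (h2 : ∀ j < l + 1, 2 ≤ α j) (hpos : 0 < ν r) {i : ℕ} (hir : i < r)
    (hi : rowCap α l i < ν i) : IsTrim α l ν r (Function.update ν i (rowCap α l i)) := by
  have h1 : ∀ j < l + 1, 1 ≤ α j := fun j hj => (h2 j hj).trans' one_le_two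
  have hrl := hν.le_last hpos
  have hnext_pos {j : ℕ} (hj : j ≤ r) : 0 < ν j := hpos.trans_le (hν.antitone hj)
  have hcap_ge {j : ℕ} (hj : j < l) := le_rowCap_add hα (fun j hj => h2 j (by omega)) hj
  have hlt {j : ℕ} (hij : i < j) (hj : j ≤ r) :=
    hν.row_add_lt_of_rowCap_lt h1 hij hi (hnext_pos hj)
  refine ⟨fun j => ?_, update_le_self_iff.2 hi.le, Function.update_of_ne (by omega) _ _,
    fun k hk => ?_, hν.sum_range_add_le_sum_range_update h2 hpos hir le_rfl, ?_,
    fun j hj => ?_⟩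
  · obtain rfl | hj := eq_or_ne j i
    · rw [Function.update_self]
      have := hlt (lt_add_one j) hir
      have := hcap_ge (hir.trans_le hrl)
      omega
    · rw [Function.update_of_ne hj]
      exact hν.antitone j.le_succ
  · obtain hki | hik := le_or_gt k i
    · rw [sum_range_update_of_le _ _ hki]
      exact hν.sum_le k (by omega)
    · exact (Nat.le_add_right _ _).trans
        (hν.sum_range_add_le_sum_range_update h2 hpos hik hk.le)
  · have hsum := sum_range_update_add ν (rowCap α l i) hir
    have := rowCap_succ_add_one h1 (hir.trans_le hrl)
    have := hν.row_le i
    omega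
  · obtain rfl | hji := eq_or_ne j i
    · rw [Function.update_self]
    · rw [Function.update_of_ne hji]
      by_contra! hj'
      obtain hij | hij := hji.symm.lt_or_gt
      · have := hlt hij hj.le
        have := hcap_ge (hj.trans_le hrl)
        omega
      · have := hν.row_add_lt_of_rowCap_lt h1 hij hj' (hnext_pos hir.le)
        have := hcap_ge (hir.trans_le hrl)
        omega

theorem exists_isTrim (hν : Admissible α (l + 1) ν) (hα : Antitone α)
    (h2 : ∀ j < l + 1, 2 ≤ α j) (hpos : 0 < ν r) (hnext : ν (r + 1) = 0) :
    ∃ U, IsTrim α l ν r U ∧ (ExtendableLastRow α (l + 1) ν r → ∃ i < r, U i < ν i) := by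
  by_cases hcap : ∀ j < r, ν j ≤ rowCap α l j
  · by_cases hr : ExtendableLastRow α (l + 1) ν r
    · have hlt := hr.lt_pred
      refine ⟨_, hν.isTrim_update_pred h2 hr hcap, fun _ => ⟨r - 1, ?_, ?_⟩⟩
      · exact Nat.sub_one_lt fun h => by simp [h] at hlt
      · rw [Function.update_self]
        omega
    · exact ⟨ν, hν.isTrim_self (fun j hj => (h2 j hj).trans' one_le_two) hpos hnext hcap,
        fun h => absurd h hr⟩
  · push Not at hcap
    obtain ⟨i, hir, hi⟩ := hcap
    exact ⟨_, hν.isTrim_update_rowCap hα h2 hpos hir hi,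
      fun _ => ⟨i, hir, by rwa [Function.update_self]⟩⟩

theorem sum_le_of_isTrim (hν : Admissible α (l + 1) ν) (hnext : ν (r + 1) = 0) {U : ℕ → ℕ}
    (hU : IsTrim α l ν r U) : ∀ k ≤ l, ∑ j ∈ range k, α j ≤ ∑ j ∈ range k, U j := by
  intro k hk
  obtain hkr | rfl | hrk := lt_trichotomy k r
  · exact hU.sum_le k hkr
  · exact (Nat.le_add_right _ _).trans hU.sum_add_le
  · have hα := sum_range_le_sum_range α hk
    have hU' := sum_range_le_sum_range U hrk
    have htotal := hν.sum_range_eq hnext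
    have := hU.sum_lt
    have := hU.last
    simp only [sum_range_succ] at hα hU' htotal
    omega

theorem lt_and_extendableLastRow_of_isTrim (hν : Admissible α (l + 1) ν)
    (h1 : ∀ j < l, 1 ≤ α j) (hnext : ν (r + 1) = 0) {U v : ℕ → ℕ} (hU : IsTrim α l ν r U)
    (hrl : r < l) (hfull : ∀ j < r, v j = U j) (hvpos : 0 < v r) (hvnext : v (r + 1) = 0)
    (hsum : ∑ j ∈ range (r + 1), v j = ∑ j ∈ range l, α j) :
    v r < ν r ∧ ExtendableLastRow α l v r := by
  have htotal := hν.sum_range_eq hnext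
  have hcap := rowCap_add h1 hrl
  have hslack := hU.sum_add_le
  have hcost := hU.sum_lt
  have hr0 : 0 < r := Nat.pos_of_ne_zero fun h => by
    subst h
    rw [range_zero, sum_empty, sum_empty] at hslack
    omega
  have hpred : ν r ≤ v (r - 1) := by
    have := hU.succ_le (r - 1)
    rwa [Nat.sub_add_cancel hr0, ← hfull _ (Nat.sub_one_lt_of_lt hr0)] at this
  have hrows : ∑ j ∈ range r, v j = ∑ j ∈ range r, U j :=
    sum_congr rfl fun j hj => hfull j (mem_range.1 hj)
  rw [sum_range_succ] at hsum
  rw [sum_range_succ, sum_range_succ] at htotal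
  exact ⟨by omega, hvpos, hvnext, by omega, by omega⟩

theorem exists_admissible_below (hν : Admissible α (l + 1) ν) (hα : Antitone α)
    (h1 : ∀ j < l, 1 ≤ α j) (hpos : 0 < ν r) (hnext : ν (r + 1) = 0) {U : ℕ → ℕ}
    (hU : IsTrim α l ν r U) :
    ∃ v, Admissible α l v ∧ IsHorizontalStrip v ν ∧ v ≤ U ∧ v r < ν r ∧
      (v r = 0 ∨ ExtendableLastRow α l v r) := by
  obtain ⟨v, hstrip, hvU, hv0, hdom, hsum, hext⟩ :=
    hν.exists_horizontalStrip_below hα hU.succ_le hU.le (hν.sum_le_of_isTrim hnext hU)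
  have hanti : Antitone v := antitone_nat_of_succ_le fun j => (hstrip (j + 1)).2.trans (hstrip j).1
  have hvnext : v (r + 1) = 0 := Nat.le_zero.1 (hnext ▸ (hstrip (r + 1)).2)
  have hzero : ∀ j ≥ r + 1, v j = 0 := fun j hj => Nat.le_zero.1 (hvnext ▸ hanti hj)
  have hrow : v r < ν r ∧ (v r = 0 ∨ ExtendableLastRow α l v r) := by
    obtain hv | hv := Nat.eq_zero_or_pos (v r)
    · exact ⟨hv ▸ hpos, .inl hv⟩
    · have hrl : r < l := by
        by_contra! h
        exact hv.ne' (hv0 r h)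
      have := hν.lt_and_extendableLastRow_of_isTrim h1 hnext hU hrl
        (fun j hj => (hext j r hj).resolve_right (by omega)) hv hvnext
        ((eventually_constant_sum hzero hrl).symm.trans hsum)
      exact ⟨this.1, .inr this.2⟩
  refine ⟨v, ⟨hanti, hdom, hsum, fun j => ?_⟩, hstrip, hvU, hrow⟩
  obtain hjr | rfl | hrj := lt_trichotomy j r
  · exact (hvU j).trans (hU.row_le j hjr)
  · exact hrow.2.elim (fun h => h ▸ Nat.zero_le _) fun h => h.lt_rowCap.le
  · exact (hzero j hrj).trans_le (Nat.zero_le _)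

end Admissible

end Admissible

section Chain

open Finset

variable {α ν : ℕ → ℕ} {l : ℕ} {μ : ℕ → ℕ → ℕ}

theorem eq_zero_of_isHorizontalStrip (h0 : μ 0 = 0)
    (hstrip : ∀ k < l, IsHorizontalStrip (μ k) (μ (k + 1))) {k j : ℕ} (hk : k ≤ l)
    (hkj : k ≤ j) : μ k j = 0 := by
  induction k generalizing j with
  | zero => rw [h0, Pi.zero_apply]
  | succ k ih =>
    obtain ⟨i, rfl⟩ := Nat.exists_eq_add_of_le' hkj
    exact Nat.le_zero.1 ((hstrip k hk (i + k)).1.trans_eq (ih (by omega) (by omega)))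

namespace Chain

theorem mono (h : Chain α l μ) {k m : ℕ} (hkm : k ≤ m) (hm : m ≤ l) : μ k ≤ μ m := by
  induction m, hkm using Nat.le_induction with
  | base => exact le_rfl
  | succ m _ ih => exact (ih (by omega)).trans fun j => (h.strip m hm j).2

theorem eq_zero (h : Chain α l μ) {k j : ℕ} (hk : k ≤ l) (hkj : k ≤ j) : μ k j = 0 :=
  eq_zero_of_isHorizontalStrip h.zero h.strip hk hkj

theorem sum_range (h : Chain α l μ) {k n : ℕ} (hk : k ≤ l) (hkn : k ≤ n) :
    ∑ j ∈ range n, μ k j = ∑ j ∈ range k, α j :=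
  (eventually_constant_sum (fun _ hj => h.eq_zero hk hj) hkn).trans (h.sum k hk)

theorem antitone (h : Chain α l μ) : Antitone (μ l) := by
  refine antitone_nat_of_succ_le fun j => ?_
  cases l with
  | zero => rw [h.zero, Pi.zero_apply, Pi.zero_apply]
  | succ l => exact (h.strip l l.lt_succ_self j).1.trans (h.strip l l.lt_succ_self j).2

theorem snoc (h : Chain α l μ) (hν : IsHorizontalStrip (μ l) ν)
    (hsum : ∑ j ∈ range (l + 1), ν j = ∑ j ∈ range (l + 1), α j)
    (hdesc : 0 < l → ∃ i j, i < j ∧ μ (l - 1) i < μ l i ∧ μ l j < ν j) :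
    Chain α (l + 1) (Function.update μ (l + 1) ν) := by
  have hupd {k : ℕ} (hk : k ≤ l) : Function.update μ (l + 1) ν k = μ k :=
    Function.update_of_ne (by omega) _ _
  refine ⟨(hupd l.zero_le).trans h.zero, fun k hk => ?_, fun k hk => ?_, fun k hk => ?_⟩
  · obtain rfl | hk := Nat.lt_succ_iff_lt_or_eq.1 hk |>.symm
    · rwa [hupd le_rfl, Function.update_self]
    · rw [hupd hk.le, hupd hk]
      exact h.strip k hk
  · obtain rfl | hk := hk.eq_or_lt
    · rwa [Function.update_self]
    · rw [hupd (by omega)]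
      exact h.sum k (by omega)
  · obtain hk | hk := (Nat.lt_succ_iff.1 hk).eq_or_lt
    · subst hk
      rw [hupd k.le_succ, hupd le_rfl, Function.update_self]
      exact hdesc k.succ_pos
    · rw [hupd (by omega), hupd (by omega), hupd (by omega)]
      exact h.desc k (by omega)

theorem exists_lt_last (h : Chain α (l + 1) μ) (hα : 0 < α l) : ∃ i, μ l i < μ (l + 1) i := by
  by_contra! hle
  have := sum_le_sum (s := range (l + 1)) fun i _ => hle i
  rw [h.sum_range le_rfl le_rfl, h.sum_range l.le_succ l.le_succ, sum_range_succ] at this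
  omega

theorem sum_range_add_le (h : Chain α l μ) {i m : ℕ} (him : i ≤ m) (hm : m < l) :
    ∑ j ∈ range i, α j + (m - i) ≤
      ∑ j ∈ range i, μ m j + ∑ j ∈ Ico (i + 1) l, μ (m + 1) j := by
  induction m, him using Nat.le_induction with
  | base =>
    rw [h.sum i hm.le]
    omega
  | succ m _ ih =>
    have ih := ih (by omega)
    obtain ⟨p, q, hpq, hp, hq⟩ := h.desc m hm
    have hmono := h.mono (by omega : m ≤ m + 1) hm.le
    have hmono' := h.mono (by omega : m + 1 ≤ m + 1 + 1) hm
    obtain hpi | hip := lt_or_ge p i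
    · have := sum_lt_sum (fun j _ => hmono j) ⟨p, mem_range.2 hpi, hp⟩
      have := sum_le_sum (s := Ico (i + 1) l) fun j _ => hmono' j
      omega
    · have hql : q < l := by
        by_contra! hlq
        exact hq.not_ge ((h.eq_zero hm ((Nat.succ_le_of_lt hm).trans hlq)).trans_le (Nat.zero_le _))
      have := sum_le_sum (s := range i) fun j _ => hmono j
      have := sum_lt_sum (s := Ico (i + 1) l) (fun j _ => hmono' j)
        ⟨q, mem_Ico.2 ⟨by omega, hql⟩, hq⟩
      omega

theorem row_le (h : Chain α l μ) (i : ℕ) : μ l i ≤ rowCap α l i := by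
  obtain hli | hil := le_or_gt l i
  · exact (h.eq_zero le_rfl hli).trans_le (Nat.zero_le _)
  · have hsplit := sum_range_add_sum_Ico (μ l) (by omega : i + 1 ≤ l)
    have hsplit' := sum_range_add_sum_Ico α hil.le
    have htotal := h.sum l le_rfl
    have hkey := h.sum_range_add_le (i := i) (m := l - 1) (by omega) (by omega)
    have := sum_le_sum (s := range i) fun j _ => h.mono (by omega : l - 1 ≤ l) le_rfl j
    rw [Nat.sub_add_cancel (by omega : 1 ≤ l)] at hkey
    rw [sum_range_succ] at hsplit
    unfold rowCap
    omega

theorem admissible (h : Chain α l μ) : Admissible α l (μ l) where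
  antitone := h.antitone
  sum_le k hk := (h.sum k hk).symm.trans_le (sum_le_sum fun j _ => h.mono hk le_rfl j)
  sum_eq := h.sum l le_rfl
  row_le := h.row_le

end Chain

-- The last clause is what the induction needs: if the next strip only lengthens row `r`, it still
-- produces a descent.
theorem Admissible.exists_chain (hν : Admissible α l ν) (hα : Antitone α)
    (h2 : ∀ j < l, 2 ≤ α j) :
    ∃ μ, Chain α l μ ∧ μ l = ν ∧
      ∀ r, ExtendableLastRow α l ν r → ∃ i < r, μ (l - 1) i < μ l i := by
  induction l generalizing ν with
  | zero =>
    refine ⟨0, ⟨rfl, by simp, by simp, by simp⟩, funext fun i => (hν.eq_zero i.zero_le).symm,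
      fun r hr => absurd (hν.eq_zero r.zero_le) hr.pos.ne'⟩
  | succ l ih =>
    have h1 : ∀ j < l + 1, 1 ≤ α j := fun j hj => (h2 j hj).trans' one_le_two
    obtain ⟨r, hpos, hnext⟩ := hν.exists_last (h1 0 l.succ_pos)
    obtain ⟨U, hU, hext⟩ := hν.exists_isTrim hα h2 hpos hnext
    obtain ⟨v, hv, hstrip, hvU, hrow, hlast⟩ :=
      hν.exists_admissible_below hα (fun j hj => h1 j (by omega)) hpos hnext hU
    obtain ⟨μ, hμ, rfl, hgrow⟩ := ih hv fun j hj => h2 j (by omega)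
    have hdesc (hl : 0 < l) : ∃ i < r, μ (l - 1) i < μ l i := by
      obtain hzero | hlast := hlast
      · obtain ⟨l, rfl⟩ := Nat.exists_eq_add_one_of_ne_zero hl.ne'
        obtain ⟨i, hi⟩ := hμ.exists_lt_last (h1 l (by omega))
        refine ⟨i, ?_, hi⟩
        by_contra! hri
        have := hv.antitone hri
        omega
      · exact hgrow r hlast
    have hr_unique {r' : ℕ} (hr' : ExtendableLastRow α (l + 1) ν r') : r' = r :=
      hν.last_unique hr'.pos hr'.succ_eq_zero hpos hnext
    refine ⟨Function.update μ (l + 1) ν, hμ.snoc hstrip hν.sum_eq fun hl => ?_,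
      Function.update_self .., fun r' hr' => ?_⟩
    · obtain ⟨i, hir, hi⟩ := hdesc hl
      exact ⟨i, r, hir, hi, hrow⟩
    · obtain ⟨i, hir, hi⟩ := hext (hr_unique hr' ▸ hr')
      refine ⟨i, by rwa [hr_unique hr'], ?_⟩
      rw [Nat.add_sub_cancel, Function.update_self, Function.update_of_ne (by omega)]
      exact (hvU i).trans_lt hi

theorem exists_chain_iff_admissible (hα : Antitone α) (h2 : ∀ j < l, 2 ≤ α j) :
    (∃ μ, Chain α l μ ∧ μ l = ν) ↔ Admissible α l ν := by
  refine ⟨fun ⟨μ, hμ, hν⟩ => hν ▸ hμ.admissible, fun hν => ?_⟩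
  obtain ⟨μ, hμ, hl, -⟩ := hν.exists_chain hα h2
  exact ⟨μ, hμ, hl⟩

end Chain

section Cells

open Finset

variable {a nu : List ℕ}

/-- The parts of `a` as a sequence, numbered from `0` and continued by zeros. -/
def part (a : List ℕ) (i : ℕ) : ℕ := a.getD i 0

theorem part_of_length_le {i : ℕ} (h : a.length ≤ i) : part a i = 0 := List.getD_eq_default _ _ h

theorem part_mem {i : ℕ} (h : i < a.length) : part a i ∈ a := by
  rw [part, List.getD_eq_getElem _ _ h]
  exact List.getElem_mem h

theorem le_part {m : ℕ} (ha : PartsGE a m) : ∀ i < a.length, m ≤ part a i :=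
  fun _ hi => ha _ (part_mem hi)

theorem part_antitone (ha : IsPartition a) : Antitone (part a) := by
  intro i j hij
  obtain hj | hj := lt_or_ge j a.length
  · rw [part, part, List.getD_eq_getElem _ _ hj, List.getD_eq_getElem _ _ (hij.trans_lt hj)]
    obtain rfl | hij := hij.eq_or_lt
    · exact le_rfl
    · exact List.pairwise_iff_getElem.1 ha.1 i j _ hj hij
  · exact (part_of_length_le hj).trans_le (Nat.zero_le _)

theorem sum_take_eq (a : List ℕ) (k : ℕ) : (a.take k).sum = ∑ j ∈ range k, part a j := by
  induction k with
  | zero => rfl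
  | succ k ih =>
    rw [sum_range_succ, ← ih, List.take_add_one, List.sum_append, part, List.getD_eq_getElem?_getD]
    cases a[k]? <;> simp

theorem sum_range_part {n : ℕ} (h : a.length ≤ n) : ∑ j ∈ range n, part a j = a.sum := by
  rw [← sum_take_eq, List.take_of_length_le h]

theorem sum_range_part_le (a : List ℕ) (n : ℕ) : ∑ j ∈ range n, part a j ≤ a.sum := by
  rw [← sum_range_part (le_max_left a.length n)]
  exact sum_range_le_sum_range _ (le_max_right _ _)

theorem sum_drop_eq (a : List ℕ) {i : ℕ} (hi : i ≤ a.length) :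
    (a.drop i).sum = ∑ j ∈ Ico i a.length, part a j := by
  have hlist := List.sum_take_add_sum_drop a i
  have hsplit := sum_range_add_sum_Ico (part a) hi
  rw [sum_range_part le_rfl] at hsplit
  rw [sum_take_eq] at hlist
  omega

theorem sum_range_part_strictMonoOn (ha : PartsGE a 1) :
    StrictMonoOn (fun k => ∑ j ∈ range k, part a j) (Set.Iic a.length) := by
  intro k _ m hm hkm
  have := sum_range_add_mul_le hkm.le fun j _ hj => le_part ha j (hj.trans_le hm)
  change ∑ j ∈ range k, part a j < ∑ j ∈ range m, part a j
  omega

theorem domLE_iff (hsum : nu.sum = a.sum) :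
    DomLE a nu ↔ ∀ k ≤ a.length, ∑ j ∈ range k, part a j ≤ ∑ j ∈ range k, part nu j := by
  simp only [DomLE, hsum, true_and, sum_take_eq]
  refine ⟨fun h k _ => h k, fun h k => ?_⟩
  obtain hk | hk := le_total k a.length
  · exact h k hk
  · rw [sum_range_part hk, ← sum_range_part le_rfl]
    exact (h _ le_rfl).trans (sum_range_le_sum_range _ hk)

theorem domLE_pair_iff {n m : ℕ} (hsum : nu.sum = n) (hm : m ≤ n) :
    DomLE nu [n - m, m] ↔ part nu 0 ≤ n - m := by
  have hpair : [n - m, m].sum = n := by simp [hm]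
  constructor
  · intro h
    simpa [sum_take_eq] using h.2 1
  · refine fun h => ⟨hsum.trans hpair.symm, fun i => ?_⟩
    match i with
    | 0 => rfl
    | 1 => simpa [sum_take_eq] using h
    | i + 2 =>
      rw [sum_take_eq, List.take_of_length_le (by simp), hpair, ← hsum]
      exact sum_range_part_le nu _

theorem Admissible.of_domLE (hnu : IsPartition nu) (hsum : nu.sum = a.sum) (hdom : DomLE a nu)
    (hcap : ∀ i, i + 1 < a.length → part nu i ≤ rowCap (part a) a.length i) :
    Admissible (part a) a.length (part nu) := by
  have hdom := (domLE_iff hsum).1 hdom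
  have htotal : ∑ j ∈ range a.length, part nu j = ∑ j ∈ range a.length, part a j := by
    refine le_antisymm ?_ (hdom _ le_rfl)
    rw [sum_range_part le_rfl, ← hsum]
    exact sum_range_part_le nu _
  refine ⟨part_antitone hnu, hdom, htotal, fun i => ?_⟩
  obtain hi | hi | hi := lt_trichotomy (i + 1) a.length
  · exact hcap i hi
  · have := hdom i (by omega)
    rw [← hi, sum_range_succ, sum_range_succ] at htotal
    rw [rowCap, ← hi, Nat.Ico_succ_singleton, sum_singleton]
    omega
  · have hle := sum_range_part_le nu (i + 1)
    have := sum_range_le_sum_range (part nu) (Nat.le_of_lt_succ hi)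
    rw [sum_range_part le_rfl] at htotal
    rw [sum_range_succ] at hle
    omega

theorem admissible_part_iff (ha : PartsGE a 1) (hnu : IsPartition nu) (hsum : nu.sum = a.sum) :
    Admissible (part a) a.length (part nu) ↔
      DomLE a nu ∧ DomLE nu [a.sum - (a.length - 1), a.length - 1] ∧
        ∀ i, i + 1 < a.length → nu.getD i 0 + (a.length - 1 - i) ≤ (a.drop i).sum := by
  have hcap_iff {i : ℕ} (hi : i < a.length) : part nu i ≤ rowCap (part a) a.length i ↔
      nu.getD i 0 + (a.length - 1 - i) ≤ (a.drop i).sum := by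
    have hcap := rowCap_add (le_part ha) hi
    have hsplit := sum_range_add_sum_Ico (part a) hi.le
    rw [sum_drop_eq a hi.le, part]
    omega
  have hlen : a.length - 1 ≤ a.sum := by
    have := sum_range_add_mul_le a.length.zero_le fun j _ => le_part ha j
    rw [sum_range_part le_rfl, range_zero, sum_empty] at this
    omega
  rw [domLE_pair_iff hsum hlen]
  constructor
  · refine fun h => ⟨(domLE_iff hsum).2 h.sum_le, ?_,
      fun i hi => (hcap_iff (by omega)).1 (h.row_le i)⟩
    have := h.row_le 0
    rwa [rowCap, Nat.Ico_zero_eq_range, sum_range_part le_rfl, Nat.sub_zero] at this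
  · rintro ⟨hdom, -, hcap⟩
    exact .of_domLE hnu hsum hdom fun i hi => (hcap_iff (by omega)).2 (hcap i hi)

theorem mem_cells {x : ℕ × ℕ} : x ∈ cells nu ↔ x.2 < part nu x.1 := by
  have hle : part nu x.1 ≤ nu.sum := by
    refine le_trans ?_ (sum_range_part_le nu (x.1 + 1))
    exact single_le_sum (fun _ _ => Nat.zero_le _) (self_mem_range_succ x.1)
  have hlt (h : x.2 < part nu x.1) : x.1 < nu.length := by
    by_contra! hx
    rw [part_of_length_le hx] at h
    exact h.not_ge (Nat.zero_le _)
  simp only [cells, mem_filter, mem_product, mem_range]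
  exact ⟨fun h => h.2, fun h => ⟨⟨hlt h, by omega⟩, h⟩⟩

theorem mem_cells_of_le (hnu : IsPartition nu) {i i' c c' : ℕ} (hi : i ≤ i') (hc : c ≤ c')
    (h : (i', c') ∈ cells nu) : (i, c) ∈ cells nu :=
  mem_cells.2 (hc.trans_lt ((mem_cells.1 h).trans_le (part_antitone hnu hi)))

theorem card_filter_cells (P : ℕ × ℕ → Prop) [DecidablePred P] {n : ℕ}
    (hn : ∀ x ∈ cells nu, P x → x.1 < n) :
    #{x ∈ cells nu | P x} = ∑ i ∈ range n, #{c ∈ range (part nu i) | P (i, c)} := by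
  rw [card_eq_sum_card_fiberwise (f := Prod.fst) (t := range n) fun x hx =>
    mem_range.2 (hn x (mem_filter.1 hx).1 (mem_filter.1 hx).2)]
  refine sum_congr rfl fun i _ => card_nbij' Prod.snd (Prod.mk i) ?_ ?_ ?_ ?_
  · rintro ⟨j, c⟩ hx
    obtain ⟨⟨hmem, hP⟩, rfl⟩ : ((j, c) ∈ cells nu ∧ P (j, c)) ∧ j = i := by simpa using hx
    exact mem_coe.2 (mem_filter.2 ⟨mem_range.2 (mem_cells.1 hmem), hP⟩)
  all_goals simp +contextual [Set.MapsTo, Set.LeftInvOn, Set.RightInvOn, mem_cells]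

theorem card_cells (nu : List ℕ) : #(cells nu) = nu.sum := by
  have h := card_filter_cells (nu := nu) (fun _ => True) (n := nu.length) fun x hx _ => by
    by_contra! hlen
    exact (mem_cells.1 hx).not_ge ((part_of_length_le hlen).trans_le (Nat.zero_le _))
  simpa only [filter_true, card_range, sum_range_part le_rfl] using h

theorem mem_iff_lt_card_of_isLowerSet {s : Finset ℕ} (hs : IsLowerSet (s : Set ℕ)) {c : ℕ} :
    c ∈ s ↔ c < #s := by
  have hsub : s ⊆ range #s := fun c hc => mem_range.2 <| by
    have : range (c + 1) ⊆ s := fun b hb => hs (Nat.lt_succ_iff.1 (mem_range.1 hb)) hc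
    simpa using card_le_card this
  rw [← mem_range, ← eq_of_subset_of_card_le hsub (card_range _).le]

end Cells

section Tableaux

open Finset

variable {a nu al : List ℕ} {T U : ℕ × ℕ → ℕ} {x y : ℕ × ℕ}

theorem card_filter_le_succ {ι : Type*} (s : Finset ι) (f : ι → ℕ) (k : ℕ) :
    #{x ∈ s | f x ≤ k + 1} = #{x ∈ s | f x ≤ k} + #{x ∈ s | f x = k + 1} := by
  classical
  rw [← card_union_of_disjoint, ← filter_or]
  · simp only [Nat.le_succ_iff, Nat.succ_eq_add_one]
  · exact disjoint_filter.2 fun x _ h h' => by omega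

namespace IsTab

theorem one_le (hT : IsTab nu al T) (hx : x ∈ cells nu) : 1 ≤ T x := hT.2.1 x hx

theorem card_filter_eq (hT : IsTab nu al T) (k : ℕ) : #{x ∈ cells nu | T x = k + 1} = part al k :=
  hT.2.2.2.2 k

theorem card_filter_le (hT : IsTab nu al T) (k : ℕ) :
    #{x ∈ cells nu | T x ≤ k} = ∑ j ∈ range k, part al j := by
  induction k with
  | zero =>
    rw [range_zero, sum_empty, card_eq_zero]
    exact filter_false_of_mem fun x hx => by simpa using (hT.one_le hx).not_gt
  | succ k ih => rw [card_filter_le_succ, ih, hT.card_filter_eq, sum_range_succ]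

theorem row_mono (hT : IsTab nu al T) {i c c' : ℕ} (hc : c ≤ c') (h : (i, c') ∈ cells nu) :
    T (i, c) ≤ T (i, c') := by
  induction c', hc using Nat.le_induction with
  | base => exact le_rfl
  | succ c' _ ih =>
    have hc' : (i, c') ∈ cells nu := mem_cells.2 ((mem_cells.1 h).trans' c'.lt_succ_self)
    exact (ih hc').trans (hT.2.2.1 i c' h)

theorem col_strictMono (hnu : IsPartition nu) (hT : IsTab nu al T) {i i' c : ℕ} (hi : i < i')
    (h : (i', c) ∈ cells nu) : T (i, c) < T (i', c) := by
  induction i', hi using Nat.le_induction with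
  | base => exact hT.2.2.2.1 i c h
  | succ i' _ ih =>
    exact (ih (mem_cells_of_le hnu i'.le_succ le_rfl h)).trans (hT.2.2.2.1 i' c h)

theorem row_le_of_eq (hnu : IsPartition nu) (hT : IsTab nu al T) (hy : y ∈ cells nu)
    (hxy : T x = T y) (hcol : x.2 ≤ y.2) : y.1 ≤ x.1 := by
  by_contra! hrow
  have hmid : (x.1, y.2) ∈ cells nu := mem_cells_of_le hnu hrow.le le_rfl hy
  exact ((hT.row_mono hcol hmid).trans_lt (hT.col_strictMono hnu hrow hy)).ne hxy

theorem le_length (hT : IsTab nu al T) (hx : x ∈ cells nu) : T x ≤ al.length := by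
  by_contra! h
  have hmem : x ∈ {y ∈ cells nu | T y = T x - 1 + 1} :=
    mem_filter.2 ⟨hx, by have := hT.one_le hx; omega⟩
  have := card_pos.2 ⟨x, hmem⟩
  rw [hT.card_filter_eq, part_of_length_le (by omega)] at this
  exact this.false

end IsTab

theorem part_replicate_one {N k : ℕ} (h : k < N) : part (List.replicate N 1) k = 1 := by
  rw [part, List.getD_eq_getElem _ _ (by simpa using h), List.getElem_replicate]

theorem sum_range_part_replicate_one {N k : ℕ} (h : k ≤ N) :
    ∑ j ∈ range k, part (List.replicate N 1) j = k := by
  rw [sum_congr rfl fun j hj => part_replicate_one ((mem_range.1 hj).trans_le h), sum_const,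
    card_range, smul_eq_mul, mul_one]

section Standard

variable {N : ℕ} (hU : IsTab nu (List.replicate N 1) U)
include hU

theorem IsTab.exists_eq {n : ℕ} (h1 : 1 ≤ n) (hn : n ≤ N) : ∃ x ∈ cells nu, U x = n := by
  have hcard := hU.card_filter_eq (n - 1)
  rw [part_replicate_one (by omega), Nat.sub_add_cancel h1] at hcard
  obtain ⟨x, hx⟩ := card_eq_one.1 hcard
  exact ⟨x, mem_filter.1 (hx ▸ mem_singleton_self x)⟩

theorem IsTab.eq_of_eq (hx : x ∈ cells nu) (hy : y ∈ cells nu) (h : U x = U y) : x = y := by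
  have hle : #{z ∈ cells nu | U z = U x - 1 + 1} ≤ 1 := by
    have := hU.one_le hx
    have := hU.le_length hx
    rw [List.length_replicate] at this
    rw [hU.card_filter_eq, part_replicate_one (by omega)]
  rw [Nat.sub_add_cancel (hU.one_le hx)] at hle
  exact card_le_one.1 hle _ (mem_filter.2 ⟨hx, rfl⟩) _ (mem_filter.2 ⟨hy, h.symm⟩)

theorem IsTab.row_le_of_forall_not_isDescent (hx : x ∈ cells nu) (hy : y ∈ cells nu)
    (hxy : U x ≤ U y) (h : ∀ n, U x ≤ n → n < U y → ¬ IsDescent nu U n) : y.1 ≤ x.1 := by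
  induction hd : U y - U x generalizing y with
  | zero => rw [hU.eq_of_eq hx hy (by omega)]
  | succ d ih =>
    have hle := hU.le_length hy
    rw [List.length_replicate] at hle
    obtain ⟨z, hz, hzy⟩ := hU.exists_eq (n := U y - 1) (by have := hU.one_le hx; omega) (by omega)
    have hzx := ih hz (by omega) (fun n hn hnz => h n hn (by omega)) (by omega)
    have hyz : ¬ z.1 < y.1 := fun hlt =>
      h (U z) (by omega) (by omega) ⟨z, hz, y, hy, rfl, by omega, hlt⟩
    omega

end Standard

/-- The length of row `i` of the shape formed by the entries `≤ n` of `T`. -/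
def shapeLE (nu : List ℕ) (T : ℕ × ℕ → ℕ) (n i : ℕ) : ℕ :=
  #{c ∈ range (part nu i) | T (i, c) ≤ n}

theorem IsTab.lt_shapeLE_iff (hT : IsTab nu al T) {n i c : ℕ} :
    c < shapeLE nu T n i ↔ (i, c) ∈ cells nu ∧ T (i, c) ≤ n := by
  have hlower : IsLowerSet (({c ∈ range (part nu i) | T (i, c) ≤ n} : Finset ℕ) : Set ℕ) := by
    intro c b hbc hc
    rw [mem_coe, mem_filter, mem_range] at hc ⊢
    exact ⟨hbc.trans_lt hc.1, (hT.row_mono hbc (mem_cells.2 hc.1)).trans hc.2⟩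
  rw [shapeLE, ← mem_iff_lt_card_of_isLowerSet hlower, mem_filter, mem_range, mem_cells]

theorem IsTab.shapeLE_zero (hT : IsTab nu al T) : shapeLE nu T 0 = 0 := by
  funext i
  by_contra h
  obtain ⟨hmem, hle⟩ := hT.lt_shapeLE_iff.1 (Nat.pos_of_ne_zero h)
  have := hT.one_le hmem
  omega

theorem IsTab.shapeLE_length (hT : IsTab nu al T) : shapeLE nu T al.length = part nu := by
  funext i
  rw [shapeLE, filter_true_of_mem fun c hc => hT.le_length (mem_cells.2 (mem_range.1 hc)),
    card_range]

theorem isHorizontalStrip_shapeLE {N m n : ℕ} (hnu : IsPartition nu)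
    (hU : IsTab nu (List.replicate N 1) U) (hmn : m ≤ n)
    (h : ∀ d, m < d → d < n → ¬ IsDescent nu U d) :
    IsHorizontalStrip (shapeLE nu U m) (shapeLE nu U n) := by
  refine fun i => ⟨?_, card_le_card (monotone_filter_right _ fun c _ hc => hc.trans hmn)⟩
  by_contra! hlt
  obtain ⟨hmem, hle⟩ := hU.lt_shapeLE_iff.1 hlt
  have hmem' := mem_cells_of_le hnu i.le_succ le_rfl hmem
  have hgt : m < U (i, shapeLE nu U m i) := by
    by_contra! hm
    exact (hU.lt_shapeLE_iff.2 ⟨hmem', hm⟩).false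
  have hrow := hU.row_le_of_forall_not_isDescent hmem' hmem
    (hU.col_strictMono hnu i.lt_succ_self hmem).le fun d hd hd' =>
      h d (hgt.trans_le hd) (hd'.trans_le hle)
  exact hrow.not_gt i.lt_succ_self

theorem IsTab.shapeLE_lt_shapeLE (hT : IsTab nu al T) {m n : ℕ} (hx : x ∈ cells nu)
    (hm : m < T x) (hn : T x ≤ n) : shapeLE nu T m x.1 < shapeLE nu T n x.1 := by
  have hlt : x.2 < shapeLE nu T n x.1 := hT.lt_shapeLE_iff.2 ⟨hx, hn⟩
  refine lt_of_not_ge fun hle => ?_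
  exact hm.not_ge (hT.lt_shapeLE_iff.1 (hlt.trans_le hle)).2

theorem mem_Sset_iff {n : ℕ} :
    n ∈ Sset a ↔ ∃ k, 0 < k ∧ k < a.length ∧ n = ∑ j ∈ range k, part a j := by
  simp only [← sum_take_eq]
  rfl

theorem sum_range_part_notMem_Sset (ha : PartsGE a 1) {k d : ℕ} (hk : k < a.length)
    (hd : ∑ j ∈ range k, part a j < d) (hd' : d < ∑ j ∈ range (k + 1), part a j) :
    d ∉ Sset a := by
  have hmono := sum_range_part_strictMonoOn ha
  rintro hmem
  obtain ⟨m, -, hm, rfl⟩ := mem_Sset_iff.1 hmem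
  have := (hmono.lt_iff_lt hk.le hm.le).1 hd
  have := (hmono.lt_iff_lt hm.le hk).1 hd'
  omega

theorem chain_shapeLE (ha : PartsGE a 1) (hnu : IsPartition nu)
    (hU : IsTab nu (List.replicate a.sum 1) U) (hdesc : ∀ n, IsDescent nu U n ↔ n ∈ Sset a) :
    Chain (part a) a.length fun k => shapeLE nu U (∑ j ∈ range k, part a j) := by
  have hstrip (k : ℕ) (hk : k < a.length) :
      IsHorizontalStrip (shapeLE nu U (∑ j ∈ range k, part a j))
        (shapeLE nu U (∑ j ∈ range (k + 1), part a j)) :=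
    isHorizontalStrip_shapeLE hnu hU (sum_range_le_sum_range _ k.le_succ) fun d hd hd' =>
      (hdesc d).not.2 (sum_range_part_notMem_Sset ha hk hd hd')
  refine ⟨hU.shapeLE_zero, hstrip, fun k hk => ?_, fun k hk => ?_⟩
  · simp only [shapeLE]
    rw [← card_filter_cells (fun x => U x ≤ ∑ j ∈ range k, part a j), hU.card_filter_le,
      sum_range_part_replicate_one (sum_range_part_le a k)]
    intro x hx hxk
    by_contra! hkx
    exact (hU.lt_shapeLE_iff.2 ⟨hx, hxk⟩).ne_bot
      (eq_zero_of_isHorizontalStrip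
      (μ := fun k => shapeLE nu U (∑ j ∈ range k, part a j)) hU.shapeLE_zero hstrip hk hkx)
  · have hmono := sum_range_part_strictMonoOn ha
    obtain ⟨x, hx, y, hy, hxk, hyk, hrow⟩ :=
      (hdesc _).2 (mem_Sset_iff.2 ⟨k + 1, k.succ_pos, hk, rfl⟩)
    refine ⟨x.1, y.1, hrow, hU.shapeLE_lt_shapeLE hx ?_ hxk.le,
      hU.shapeLE_lt_shapeLE hy (by omega) ?_⟩
    · rw [hxk]
      exact hmono (Set.mem_Iic.2 (by omega)) (Set.mem_Iic.2 (by omega)) k.lt_succ_self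
    · rw [hyk]
      exact hmono (Set.mem_Iic.2 (by omega)) (Set.mem_Iic.2 (by omega)) (k + 1).lt_succ_self

end Tableaux

section ChainTableau

open Finset

variable {a nu : List ℕ} {α : ℕ → ℕ} {l : ℕ} {μ : ℕ → ℕ → ℕ}

/-- The tableau of shape `μ l` whose entries `≤ k` form the shape `μ k`. -/
def chainTab (l : ℕ) (μ : ℕ → ℕ → ℕ) (x : ℕ × ℕ) : ℕ :=
  if x.2 < μ l x.1 then #{k ∈ range l | μ k x.1 ≤ x.2} else 0

namespace Chain

theorem chainTab_le_iff (h : Chain α l μ) {x : ℕ × ℕ} (hx : x.2 < μ l x.1) {k : ℕ}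
    (hk : k ≤ l) : chainTab l μ x ≤ k ↔ x.2 < μ k x.1 := by
  have hlower : IsLowerSet (({k ∈ range l | μ k x.1 ≤ x.2} : Finset ℕ) : Set ℕ) := by
    intro k m hmk hk
    rw [mem_coe, mem_filter, mem_range] at hk ⊢
    exact ⟨hmk.trans_lt hk.1, (h.mono hmk hk.1.le _).trans hk.2⟩
  rw [chainTab, if_pos hx, ← not_lt, ← mem_iff_lt_card_of_isLowerSet hlower, mem_filter, mem_range,
    not_and, not_le]
  obtain rfl | hk := hk.eq_or_lt
  · simp only [lt_self_iff_false, false_imp_iff, hx]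
  · simp only [hk, true_imp_iff]

theorem chainTab_le (h : Chain α l μ) (x : ℕ × ℕ) : chainTab l μ x ≤ l := by
  by_cases hx : x.2 < μ l x.1
  · exact (h.chainTab_le_iff hx le_rfl).2 hx
  · rw [chainTab, if_neg hx]
    exact l.zero_le

theorem one_le_chainTab (h : Chain α l μ) {x : ℕ × ℕ} (hx : x.2 < μ l x.1) :
    1 ≤ chainTab l μ x := by
  have := (h.chainTab_le_iff hx l.zero_le).not.2 (by simp [h.zero])
  omega

theorem chainTab_row_le (h : Chain α l μ) {i c : ℕ} (hc : c + 1 < μ l i) :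
    chainTab l μ (i, c) ≤ chainTab l μ (i, c + 1) := by
  have hle := h.chainTab_le (i, c + 1)
  have hlt := (h.chainTab_le_iff (x := (i, c + 1)) hc hle).1 le_rfl
  exact (h.chainTab_le_iff (x := (i, c)) (c.lt_succ_self.trans hc) hle).2
    (c.lt_succ_self.trans hlt)

theorem chainTab_col_lt (h : Chain α l μ) {i c : ℕ} (hc : c < μ l (i + 1)) :
    chainTab l μ (i, c) < chainTab l μ (i + 1, c) := by
  have hle := h.chainTab_le (i + 1, c)
  have hone := h.one_le_chainTab (x := (i + 1, c)) hc
  have hlt := (h.chainTab_le_iff hc hle).1 le_rfl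
  have hstrip := (h.strip (chainTab l μ (i + 1, c) - 1) (by omega) i).1
  rw [Nat.sub_add_cancel hone] at hstrip
  have := (h.chainTab_le_iff (x := (i, c)) (hc.trans_le (h.antitone i.le_succ))
    (by omega : chainTab l μ (i + 1, c) - 1 ≤ l)).2 (hlt.trans_le hstrip)
  omega

theorem chainTab_eq (h : Chain α l μ) {k i : ℕ} (hk : k < l) (hi : μ k i < μ (k + 1) i) :
    chainTab l μ (i, μ k i) = k + 1 := by
  have hmem := hi.trans_le (h.mono hk le_rfl i)
  have hle := (h.chainTab_le_iff (x := (i, μ k i)) hmem hk).2 hi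
  have hgt := (h.chainTab_le_iff (x := (i, μ k i)) hmem hk.le).not.2 (lt_irrefl _)
  omega

theorem card_chainTab_le (h : Chain α l μ) (hl : μ l = part nu) {k : ℕ} (hk : k ≤ l) :
    #{x ∈ cells nu | chainTab l μ x ≤ k} = ∑ j ∈ range k, α j := by
  have hiff : ∀ x ∈ cells nu, chainTab l μ x ≤ k ↔ x.2 < μ k x.1 := fun x hx =>
    h.chainTab_le_iff (hl ▸ mem_cells.1 hx) hk
  rw [filter_congr hiff, card_filter_cells _ (n := k), ← h.sum k hk]
  · refine sum_congr rfl fun i _ => ?_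
    have hle : μ k i ≤ part nu i := hl ▸ h.mono hk le_rfl i
    have : {c ∈ range (part nu i) | c < μ k i} = range (μ k i) := by
      ext c
      simpa using fun hc => hc.trans_le hle
    rw [this, card_range]
  · intro x _ hx
    by_contra! hkx
    exact hx.ne_bot (h.eq_zero hk hkx)

theorem isTab_chainTab (h : Chain (part a) a.length μ) (hl : μ a.length = part nu) :
    IsTab nu a (chainTab a.length μ) := by
  have hmem {x : ℕ × ℕ} : x ∈ cells nu ↔ x.2 < μ a.length x.1 := hl ▸ mem_cells
  refine ⟨fun x hx => if_neg (hmem.not.1 hx), fun x hx => h.one_le_chainTab (hmem.1 hx),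
    fun i c hc => h.chainTab_row_le (hmem.1 hc), fun i c hc => h.chainTab_col_lt (hmem.1 hc),
    fun k => ?_⟩
  obtain hk | hk := lt_or_ge k a.length
  · have hsucc := card_filter_le_succ (cells nu) (chainTab a.length μ) k
    rw [h.card_chainTab_le hl hk, h.card_chainTab_le hl hk.le, sum_range_succ] at hsucc
    exact (Nat.add_left_cancel hsucc).symm
  · rw [← part, part_of_length_le hk, card_eq_zero]
    exact filter_false_of_mem fun x _ => ((h.chainTab_le x).trans_lt (Nat.lt_succ_of_le hk)).ne

theorem tabDescent_chainTab (h : Chain α l μ) (hl : μ l = part nu) {k : ℕ} (h0 : 0 < k)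
    (hk : k < l) : TabDescent nu (chainTab l μ) k := by
  obtain ⟨k, rfl⟩ := Nat.exists_eq_add_one_of_ne_zero h0.ne'
  obtain ⟨i, j, hij, hi, hj⟩ := h.desc k hk
  refine ⟨(i, μ k i), mem_cells.2 ?_, (j, μ (k + 1) j), mem_cells.2 ?_,
    h.chainTab_eq (by omega) hi, h.chainTab_eq hk hj, hij⟩
  · exact hl ▸ hi.trans_le (h.mono hk.le le_rfl i)
  · exact hl ▸ hj.trans_le (h.mono hk le_rfl j)

end Chain

end ChainTableau

section Standardization

open Finset

variable {a nu al : List ℕ} {T : ℕ × ℕ → ℕ} {x y : ℕ × ℕ}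

theorem card_filter_lt_lt_card_filter_lt {ι κ : Type*} [LinearOrder κ] {s : Finset ι} {f : ι → κ}
    {x y : ι} (hx : x ∈ s) (h : f x < f y) : #{z ∈ s | f z < f x} < #{z ∈ s | f z < f y} := by
  refine card_lt_card ⟨monotone_filter_right _ fun z _ hz => hz.trans h, fun hsub => ?_⟩
  exact (mem_filter.1 (hsub (mem_filter.2 ⟨hx, h⟩))).2.false

theorem existsUnique_card_filter_lt_eq {ι κ : Type*} [LinearOrder κ] {s : Finset ι} {f : ι → κ}
    (hf : Set.InjOn f s) {k : ℕ} (hk : k < #s) : ∃! x, x ∈ s ∧ #{y ∈ s | f y < f x} = k := by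
  have hmaps : Set.MapsTo (fun x => #{y ∈ s | f y < f x}) s (range #s) := fun x hx =>
    mem_coe.2 (mem_range.2 (card_lt_card (filter_ssubset.2 ⟨x, hx, lt_irrefl _⟩)))
  have hinj : Set.InjOn (fun x => #{y ∈ s | f y < f x}) s := fun x hx y hy hxy => by
    by_contra hne
    obtain h | h := (hf.ne hx hy hne).lt_or_gt
    · exact (card_filter_lt_lt_card_filter_lt hx h).ne hxy
    · exact (card_filter_lt_lt_card_filter_lt hy h).ne' hxy
  obtain ⟨x, hx, hxk⟩ := surjOn_of_injOn_of_card_le _ hmaps hinj (card_range _).le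
    (mem_coe.2 (mem_range.2 hk))
  exact ⟨x, ⟨hx, hxk⟩, fun y hy => hinj hy.1 hx (hy.2.trans hxk.symm)⟩

/-- The key by which `stdz` sorts the cells: first by entry, then by column. -/
def stdzKey (T : ℕ × ℕ → ℕ) (x : ℕ × ℕ) : ℕ ×ₗ ℕ := toLex (T x, x.2)

theorem stdzKey_lt_iff : stdzKey T y < stdzKey T x ↔ T y < T x ∨ T y = T x ∧ y.2 < x.2 :=
  Prod.Lex.toLex_lt_toLex

theorem stdz_eq (hx : x ∈ cells nu) :
    stdz nu T x = #{y ∈ cells nu | stdzKey T y < stdzKey T x} + 1 := by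
  simp only [stdz, if_pos hx, stdzKey_lt_iff]

theorem stdz_lt_stdz_iff (hx : x ∈ cells nu) (hy : y ∈ cells nu) :
    stdz nu T x < stdz nu T y ↔ stdzKey T x < stdzKey T y := by
  rw [stdz_eq hx, stdz_eq hy, Nat.add_lt_add_iff_right]
  refine ⟨fun h => ?_, card_filter_lt_lt_card_filter_lt hx⟩
  by_contra! hle
  exact h.not_ge (card_le_card (monotone_filter_right _ fun z _ hz => hz.trans_le hle))

namespace IsTab

theorem injOn_stdzKey (hnu : IsPartition nu) (hT : IsTab nu al T) :
    Set.InjOn (stdzKey T) (cells nu) := fun x hx y hy hxy => by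
  obtain ⟨hval, hcol⟩ := Prod.mk.inj (toLex.injective hxy)
  exact Prod.ext ((hT.row_le_of_eq hnu hx hval.symm hcol.ge).antisymm
    (hT.row_le_of_eq hnu hy hval hcol.le)) hcol

theorem isTab_stdz (hnu : IsPartition nu) (hT : IsTab nu al T) :
    IsTab nu (List.replicate nu.sum 1) (stdz nu T) := by
  have hpos (x) (hx : x ∈ cells nu) : 1 ≤ stdz nu T x := by
    rw [stdz_eq hx]
    exact Nat.le_add_left _ _
  refine ⟨fun x hx => if_neg hx, hpos, fun i c hc => ?_, fun i c hc => ?_, fun k => ?_⟩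
  · have hc' := mem_cells_of_le hnu le_rfl c.le_succ hc
    refine ((stdz_lt_stdz_iff hc' hc).2 (stdzKey_lt_iff.2 ?_)).le
    exact (hT.row_mono c.le_succ hc).lt_or_eq.imp_right fun h => ⟨h, c.lt_succ_self⟩
  · have hc' := mem_cells_of_le hnu i.le_succ le_rfl hc
    exact (stdz_lt_stdz_iff hc' hc).2 (stdzKey_lt_iff.2 (.inl (hT.2.2.2.1 i c hc)))
  · have hiff : ∀ x ∈ cells nu, stdz nu T x = k + 1 ↔
        #{y ∈ cells nu | stdzKey T y < stdzKey T x} = k := fun x hx => by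
      rw [stdz_eq hx, Nat.add_right_cancel_iff]
    rw [filter_congr hiff, ← part]
    obtain hk | hk := lt_or_ge k nu.sum
    · rw [part_replicate_one hk, card_eq_one]
      obtain ⟨x, hx, hunique⟩ :=
        existsUnique_card_filter_lt_eq (hT.injOn_stdzKey hnu) (hk.trans_eq (card_cells nu).symm)
      exact ⟨x, ext fun y => by
        rw [mem_filter, mem_singleton]
        exact ⟨hunique y, fun h => h ▸ hx⟩⟩
    · rw [part_of_length_le (by simpa using hk), card_eq_zero]
      refine filter_false_of_mem fun x hx => ne_of_lt ?_
      calc #{y ∈ cells nu | stdzKey T y < stdzKey T x}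
          < #(cells nu) := card_lt_card (filter_ssubset.2 ⟨x, hx, lt_irrefl _⟩)
        _ = nu.sum := card_cells nu
        _ ≤ k := hk

theorem stdz_le_iff (hT : IsTab nu al T) (hx : x ∈ cells nu) (k : ℕ) :
    stdz nu T x ≤ ∑ j ∈ range k, part al j ↔ T x ≤ k := by
  rw [stdz_eq hx, Nat.succ_le_iff, ← hT.card_filter_le]
  constructor
  · intro h
    by_contra! hk
    refine h.not_ge (card_le_card (monotone_filter_right _ fun y _ hy => ?_))
    exact stdzKey_lt_iff.2 (.inl (lt_of_le_of_lt hy hk))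
  · refine fun h => card_lt_card ⟨monotone_filter_right _ fun y _ hy => ?_, fun hsub => ?_⟩
    · exact (stdzKey_lt_iff.1 hy).elim (fun hy => hy.le.trans h) fun hy => hy.1.trans_le h
    · exact (mem_filter.1 (hsub (mem_filter.2 ⟨hx, h⟩))).2.false

theorem mem_Sset_of_isDescent_stdz (hnu : IsPartition nu) (hT : IsTab nu al T) {n : ℕ}
    (h : IsDescent nu (stdz nu T) n) : n ∈ Sset al := by
  obtain ⟨x, hx, y, hy, hxn, hyn, hrow⟩ := h
  have hval : T x < T y := by
    have hkey := (stdz_lt_stdz_iff (T := T) hx hy).1 (by omega)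
    refine (stdzKey_lt_iff.1 hkey).resolve_right fun ⟨heq, hcol⟩ => ?_
    exact (hT.row_le_of_eq hnu hy heq hcol.le).not_gt hrow
  have hle := (hT.stdz_le_iff hx (T x)).2 le_rfl
  have hgt := (hT.stdz_le_iff hy (T x)).not.2 hval.not_ge
  exact mem_Sset_iff.2 ⟨T x, hT.one_le hx, hval.trans_le (hT.le_length hy), by omega⟩

theorem row_le_of_stdz_le (hnu : IsPartition nu) (hT : IsTab nu al T) (hx : x ∈ cells nu)
    (hy : y ∈ cells nu) (hval : T x = T y) (h : stdz nu T x ≤ stdz nu T y) : y.1 ≤ x.1 := by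
  refine hT.row_le_of_eq hnu hy hval ?_
  by_contra! hcol
  exact h.not_gt ((stdz_lt_stdz_iff hy hx).2 (stdzKey_lt_iff.2 (.inr ⟨hval.symm, hcol⟩)))

theorem isDescent_stdz (hnu : IsPartition nu) (ha : PartsGE a 1) (hsum : nu.sum = a.sum)
    (hT : IsTab nu a T) {k : ℕ} (h0 : 0 < k) (hk : k < a.length) (h : TabDescent nu T k) :
    IsDescent nu (stdz nu T) (∑ j ∈ range k, part a j) := by
  obtain ⟨k, rfl⟩ := Nat.exists_eq_add_one_of_ne_zero h0.ne'
  obtain ⟨x, hx, y, hy, hxk, hyk, hrow⟩ := h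
  set s : ℕ → ℕ := fun k => ∑ j ∈ range k, part a j
  have hs : StrictMonoOn s (Set.Iic a.length) := sum_range_part_strictMonoOn ha
  have hs0 : s k < s (k + 1) := hs (Set.mem_Iic.2 (by omega)) (Set.mem_Iic.2 hk.le) k.lt_succ_self
  have hs1 : s (k + 1) < s (k + 2) := hs (Set.mem_Iic.2 hk.le) (Set.mem_Iic.2 hk) (lt_add_one _)
  have hsN : s (k + 2) ≤ nu.sum := (sum_range_part_le a _).trans_eq hsum.symm
  have hstd := hT.isTab_stdz hnu
  obtain ⟨x', hx', hx's⟩ := hstd.exists_eq (n := s (k + 1)) (by omega) (by omega)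
  obtain ⟨y', hy', hy's⟩ := hstd.exists_eq (n := s (k + 1) + 1) (by omega) (by omega)
  have hle {z : ℕ × ℕ} (hz : z ∈ cells nu) (m : ℕ) : stdz nu T z ≤ s m ↔ T z ≤ m :=
    hT.stdz_le_iff hz m
  have hx'k : T x' = k + 1 := by
    have := (hle hx' (k + 1)).1 hx's.le
    have := (hle hx' k).not.1 (by omega)
    omega
  have hy'k : T y' = k + 2 := by
    have := (hle hy' (k + 2)).1 (by omega)
    have := (hle hy' (k + 1)).not.1 (by omega)
    omega
  have hys : s (k + 1) < stdz nu T y := lt_of_not_ge ((hle hy (k + 1)).not.2 (by omega))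
  refine ⟨x', hx', y', hy', hx's, hy's, ?_⟩
  calc x'.1 ≤ x.1 := hT.row_le_of_stdz_le hnu hx hx' (hxk.trans hx'k.symm)
        (((hle hx _).2 hxk.le).trans_eq hx's.symm)
    _ < y.1 := hrow
    _ ≤ y'.1 := hT.row_le_of_stdz_le hnu hy' hy (hy'k.trans hyk.symm) (hy's.trans_le hys)

end IsTab

theorem exists_syt_iff_exists_chain (ha : PartsGE a 1) (hnu : IsPartition nu)
    (hsum : nu.sum = a.sum) :
    (∃ U, IsTab nu (List.replicate nu.sum 1) U ∧ ∀ n, IsDescent nu U n ↔ n ∈ Sset a) ↔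
      ∃ μ, Chain (part a) a.length μ ∧ μ a.length = part nu := by
  constructor
  · rintro ⟨U, hU, hdesc⟩
    rw [hsum] at hU
    refine ⟨_, chain_shapeLE ha hnu hU hdesc, ?_⟩
    simpa only [List.length_replicate, sum_range_part le_rfl] using hU.shapeLE_length
  · rintro ⟨μ, hμ, hl⟩
    have hT := hμ.isTab_chainTab hl
    refine ⟨_, hT.isTab_stdz hnu, fun n => ⟨hT.mem_Sset_of_isDescent_stdz hnu, fun hn => ?_⟩⟩
    obtain ⟨k, h0, hk, rfl⟩ := mem_Sset_iff.1 hn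
    exact hT.isDescent_stdz hnu ha hsum h0 hk (hμ.tabDescent_chainTab hl h0 hk)

end Standardization

/-- for a partition `a` with parts ≥ 2 of length `ℓ` and a partition `nu`
of `|a|`, there is a standard Young tableau of shape `nu` with descent set exactly
`S(a) = {a₁, a₁+a₂, …, a₁+⋯+a_{ℓ-1}}` iff `nu ∈ [a, (|a|-ℓ+1, ℓ-1)]` and
`ν_i ≤ Σ_{q=i}^{ℓ} a_q − (ℓ−i)` for every `1 ≤ i ≤ ℓ−1`. -/
theorem syt_with_descent_set_S_iff
    (a nu : List ℕ) (ha : IsPartition a) (h2 : PartsGE a 2)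
    (hnu : IsPartition nu) (hsum : nu.sum = a.sum) :
    (∃ U : ℕ × ℕ → ℕ, IsTab nu (List.replicate nu.sum 1) U ∧
        ∀ n, IsDescent nu U n ↔ n ∈ Sset a) ↔
      (DomLE a nu ∧ DomLE nu [a.sum - (a.length - 1), a.length - 1] ∧
        ∀ i, i + 1 < a.length → nu.getD i 0 + (a.length - 1 - i) ≤ (a.drop i).sum) := by
  have h1 : PartsGE a 1 := fun x hx => one_le_two.trans (h2 x hx)
  rw [exists_syt_iff_exists_chain h1 hnu hsum,
    exists_chain_iff_admissible (part_antitone ha) (le_part h2), admissible_part_iff h1 hnu hsum]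

end RibbonSupport
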